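/- Let q = √(3 + 2√2 − 2√(4 + 3√2)) and a = 2^(1/4) − 1. For x ∈ [0, a] set c₁(x) = √(q² − x²) and c₂(x) = √((1/sin(π/8))² − (x + cos(π/8)/sin(π/8))²). Then ∫₀ᵃ (∫_{c₁(x)}^{c₂(x)} [ (2y − √(1 − 22·x²) − 1 − √(q² − x²))² + ( x·(y − √(1 − 22·x²) − 1)/√(q² − x²) + 22·x·(y − √(q² − x²))/√(1 − 22·x²) )² ] dy) dx < 116469/1000000. -/

import Mathlib

namespace Bolza

/-- Polynomial with rational coefficients, evaluated at a real. -/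
noncomputable def ev : List ℚ → ℝ → ℝ
  | [], _ => 0
  | a :: l, t => (a : ℝ) + t * ev l t

def padd : List ℚ → List ℚ → List ℚ
  | [], m => m
  | a :: l, [] => a :: l
  | a :: l, b :: m => (a + b) :: padd l m

def psm (c : ℚ) : List ℚ → List ℚ
  | [] => []
  | a :: l => (c * a) :: psm c l

def pmul : List ℚ → List ℚ → List ℚ
  | [], _ => []
  | a :: l, m => padd (psm a m) (0 :: pmul l m)

def qabs (a : ℚ) : ℚ := if 0 ≤ a then a else -a

def sabs : List ℚ → ℚ
  | [] => 0
  | a :: l => qabs a + sabs l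

/-- Splits the polynomial at degree `n`: low part and the absolute sum of the rest. -/
def low : ℕ → List ℚ → List ℚ
  | 0, _ => []
  | _ + 1, [] => []
  | n + 1, a :: l => a :: low n l

def high : ℕ → List ℚ → ℚ
  | 0, l => sabs l
  | _ + 1, [] => 0
  | n + 1, _ :: l => high n l

structure TM where
  p : List ℚ
  e : ℚ

def Ok (T : TM) (f : ℝ → ℝ) : Prop := ∀ t : ℝ, |t| ≤ 1 → |f t - ev T.p t| ≤ (T.e : ℝ)

def TM.add (x y : TM) : TM := ⟨padd x.p y.p, x.e + y.e⟩
def TM.sm (c : ℚ) (x : TM) : TM := ⟨psm c x.p, qabs c * x.e⟩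
def TM.sub (x y : TM) : TM := TM.add x (TM.sm (-1) y)
def TM.mulAux (r : List ℚ) (a b e f : ℚ) : TM :=
  ⟨low 8 r, high 8 r + (a * f + b * e + e * f)⟩
def TM.mul (x y : TM) : TM := TM.mulAux (pmul x.p y.p) (sabs x.p) (sabs y.p) x.e y.e
def TM.size (x : TM) : ℚ := sabs x.p + x.e
def TM.one : TM := ⟨[1], 0⟩

def lowb : List ℚ → ℚ
  | [] => 0
  | a :: l => a - sabs l

def sqrtOk (R g : TM) : Bool :=
  let d := (TM.sub (TM.mul ⟨R.p, 0⟩ ⟨R.p, 0⟩) g).size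
  let m := lowb R.p
  decide (0 < m) && (decide (d ≤ R.e * m) && decide (d ≤ m * m))

def invOk (I f : TM) : Bool :=
  let d := (TM.sub (TM.mul ⟨I.p, 0⟩ f) TM.one).size
  decide (d ≤ 1 / 2) && decide (2 * sabs I.p * d ≤ I.e)

/-- Integral of the polynomial over `[-1, 1]`, starting with exponent `k`. -/
def pint : ℕ → List ℚ → ℚ
  | _, [] => 0
  | k, a :: l => (if k % 2 = 0 then a * (2 / ((k : ℚ) + 1)) else 0) + pint (k + 1) l

def cA : TM := ⟨[357993323676529 / 10000000000000000], 1 / 10000000000000000⟩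
def cQ : TM := ⟨[864272337258898 / 10000000000000000], 1 / 10000000000000000⟩
def cK : TM := ⟨[9135727662741102 / 10000000000000000], 1 / 10000000000000000⟩

def tX (m h : ℚ) : TM := TM.mul cA ⟨[m * m, 2 * (m * h), h * h], 0⟩
def tgr (m h : ℚ) : TM := TM.sub cQ (tX m h)
def tgs (m h : ℚ) : TM := TM.sub TM.one (TM.sm 22 (tX m h))
def tgc (m h : ℚ) : TM := TM.sub (TM.sub TM.one (tX m h)) (TM.mul cK ⟨[m, h], 0⟩)

def tF2 (X u w B i : TM) : TM :=
  TM.add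
    (TM.mul u (TM.add (TM.add (TM.sm (4 / 3) (TM.mul u u)) (TM.sm (-2) (TM.mul u w))) (TM.mul w w)))
    (TM.mul X (TM.mul u (TM.add (TM.sub (TM.sm (1 / 3) (TM.mul (TM.mul B u) (TM.mul B u)))
      (TM.mul (TM.mul B u) (TM.mul w i))) (TM.mul (TM.mul w i) (TM.mul w i)))))

def tF (X r s c i j : TM) : TM :=
  tF2 X (TM.sub c r) (TM.sub (TM.add TM.one s) r) (TM.add i (TM.sm 22 j)) i

def pieceBound (F : TM) : ℚ := pint 0 F.p + 2 * F.e

def mk (l : List ℤ) (e : ℤ) : TM := ⟨l.map (fun n => mkRat n 100000000000), mkRat e 100000000000⟩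

/-- The function obtained from the inner integral. -/
noncomputable def Fr (X r s c i j : ℝ) : ℝ :=
  (c - r) * (4 / 3 * ((c - r) * (c - r)) + (-2) * ((c - r) * (1 + s - r)) +
    (1 + s - r) * (1 + s - r)) +
  X * ((c - r) * (1 / 3 * (((i + 22 * j) * (c - r)) * ((i + 22 * j) * (c - r))) -
    ((i + 22 * j) * (c - r)) * ((1 + s - r) * i) + ((1 + s - r) * i) * ((1 + s - r) * i)))

lemma ev_padd (l m : List ℚ) (t : ℝ) : ev (padd l m) t = ev l t + ev m t := by
  induction l generalizing m with
  | nil => simp [padd, ev]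
  | cons a l ih =>
    cases m with
    | nil => simp [padd, ev]
    | cons b m => simp [padd, ev, ih]; ring

lemma ev_psm (c : ℚ) (l : List ℚ) (t : ℝ) : ev (psm c l) t = c * ev l t := by
  induction l with
  | nil => simp [psm, ev]
  | cons a l ih => simp [psm, ev, ih]; ring

lemma ev_pmul (l m : List ℚ) (t : ℝ) : ev (pmul l m) t = ev l t * ev m t := by
  induction l with
  | nil => simp [pmul, ev]
  | cons a l ih => simp [pmul, ev, ih, ev_padd, ev_psm]; ring

lemma qabs_eq (a : ℚ) : qabs a = |a| := by
  unfold qabs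
  split_ifs with h
  · exact (abs_of_nonneg h).symm
  · exact (abs_of_neg (not_le.mp h)).symm

lemma sabs_nonneg (l : List ℚ) : 0 ≤ sabs l := by
  induction l with
  | nil => simp [sabs]
  | cons a l ih => simp only [sabs, qabs_eq]; positivity

lemma abs_ev_le (l : List ℚ) (t : ℝ) (ht : |t| ≤ 1) : |ev l t| ≤ (sabs l : ℝ) := by
  induction l with
  | nil => simp [ev, sabs]
  | cons a l ih =>
    simp only [ev, sabs, qabs_eq]
    push_cast
    refine (abs_add_le _ _).trans ?_
    rw [abs_mul]
    have : |t| * |ev l t| ≤ 1 * |ev l t| := mul_le_mul_of_nonneg_right ht (abs_nonneg _)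
    linarith

lemma ev_low (n : ℕ) (l : List ℚ) (t : ℝ) (ht : |t| ≤ 1) :
    |ev l t - ev (low n l) t| ≤ (high n l : ℝ) := by
  induction n generalizing l with
  | zero => simpa [low, high, ev] using abs_ev_le l t ht
  | succ n ih =>
    cases l with
    | nil => simp [low, high, ev]
    | cons a l =>
      simp only [low, high, ev]
      rw [show (a : ℝ) + t * ev l t - (a + t * ev (low n l) t) = t * (ev l t - ev (low n l) t) by ring,
        abs_mul]
      have := mul_le_mul_of_nonneg_right ht (abs_nonneg (ev l t - ev (low n l) t))
      linarith [ih l]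

lemma Ok.add {x y : TM} {f g : ℝ → ℝ} (hf : Ok x f) (hg : Ok y g) :
    Ok (TM.add x y) (fun t => f t + g t) := by
  intro t ht
  simp only [TM.add, ev_padd]
  push_cast
  rw [show f t + g t - (ev x.p t + ev y.p t) = (f t - ev x.p t) + (g t - ev y.p t) by ring]
  exact (abs_add_le _ _).trans (add_le_add (hf t ht) (hg t ht))

lemma Ok.sm {x : TM} {f : ℝ → ℝ} (c : ℚ) (hf : Ok x f) :
    Ok (TM.sm c x) (fun t => (c : ℝ) * f t) := by
  intro t ht
  simp only [TM.sm, ev_psm, qabs_eq]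
  push_cast
  rw [← mul_sub, abs_mul]
  exact mul_le_mul_of_nonneg_left (hf t ht) (abs_nonneg _)

lemma Ok.sub {x y : TM} {f g : ℝ → ℝ} (hf : Ok x f) (hg : Ok y g) :
    Ok (TM.sub x y) (fun t => f t - g t) := by
  have := hf.add (hg.sm (-1))
  intro t ht
  have h := this t ht
  simp only at h
  rw [show f t + ((-1 : ℚ) : ℝ) * g t = f t - g t by push_cast; ring] at h
  exact h

lemma Ok.mul {x y : TM} {f g : ℝ → ℝ} (hf : Ok x f) (hg : Ok y g) :
    Ok (TM.mul x y) (fun t => f t * g t) := by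
  intro t ht
  simp only [TM.mul, TM.mulAux]
  push_cast
  have h1 := ev_low 8 (pmul x.p y.p) t ht
  rw [ev_pmul] at h1
  have h2 := hf t ht
  have h3 := hg t ht
  have h4 := abs_ev_le x.p t ht
  have h5 := abs_ev_le y.p t ht
  set P := ev x.p t
  set R := ev y.p t
  have e1 : |P * (g t - R)| ≤ sabs x.p * y.e := by
    rw [abs_mul]; exact mul_le_mul h4 h3 (abs_nonneg _) (le_trans (abs_nonneg _) h4)
  have e2 : |R * (f t - P)| ≤ sabs y.p * x.e := by
    rw [abs_mul]; exact mul_le_mul h5 h2 (abs_nonneg _) (le_trans (abs_nonneg _) h5)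
  have e3 : |(f t - P) * (g t - R)| ≤ x.e * y.e := by
    rw [abs_mul]; exact mul_le_mul h2 h3 (abs_nonneg _) (le_trans (abs_nonneg _) h2)
  rw [abs_le] at *
  constructor <;> nlinarith

lemma Ok.size {x : TM} {f : ℝ → ℝ} (hf : Ok x f) (t : ℝ) (ht : |t| ≤ 1) :
    |f t| ≤ (x.size : ℝ) := by
  have h1 := hf t ht
  have h2 := abs_ev_le x.p t ht
  simp only [TM.size]
  push_cast
  rw [abs_le] at *
  constructor <;> linarith

lemma ok_exact (l : List ℚ) : Ok ⟨l, 0⟩ (ev l) := by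
  intro t _
  simp

lemma ok_one : Ok TM.one (fun _ => 1) := by
  intro t _
  simp [TM.one, ev]

lemma lowb_le (l : List ℚ) (t : ℝ) (ht : |t| ≤ 1) : (lowb l : ℝ) ≤ ev l t := by
  cases l with
  | nil => simp [lowb, ev]
  | cons a l =>
    simp only [lowb, ev]
    push_cast
    have h := abs_ev_le l t ht
    have h2 : |t * ev l t| ≤ 1 * (sabs l : ℝ) := by
      rw [abs_mul]; exact mul_le_mul ht h (abs_nonneg _) zero_le_one
    rw [abs_le] at h2
    linarith

lemma ok_sqrt {R g : TM} {f : ℝ → ℝ} (hf : Ok g f) (h : sqrtOk R g = true) :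
    Ok R (fun t => Real.sqrt (f t)) := by
  simp only [sqrtOk, Bool.and_eq_true, decide_eq_true_eq] at h
  obtain ⟨h1, h2, h3⟩ := h
  intro t ht
  have hd := (((ok_exact R.p).mul (ok_exact R.p)).sub hf).size t ht
  have hm := lowb_le R.p t ht
  set d := (TM.sub (TM.mul ⟨R.p, 0⟩ ⟨R.p, 0⟩) g).size
  have h1' : (0 : ℝ) < lowb R.p := by exact_mod_cast h1
  have h2' : (d : ℝ) ≤ R.e * lowb R.p := by exact_mod_cast h2
  have h3' : (d : ℝ) ≤ lowb R.p * lowb R.p := by exact_mod_cast h3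
  set P := ev R.p t
  set m : ℝ := (lowb R.p : ℝ)
  have hf0 : 0 ≤ f t := by
    have := (abs_le.mp hd).2
    nlinarith
  set S := Real.sqrt (f t) with hS
  have hSn : 0 ≤ S := Real.sqrt_nonneg _
  have hsq : S * S = f t := Real.mul_self_sqrt hf0
  show |S - P| ≤ R.e
  have h5 : |S - P| * (S + P) ≤ d := by
    have : |S - P| * (S + P) = |P * P - f t| := by
      rw [← hsq, show P * P - S * S = -((S - P) * (S + P)) by ring, abs_neg, abs_mul,
        abs_of_nonneg (by linarith : 0 ≤ S + P)]
    rw [this]; exact hd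
  have h6 : |S - P| * m ≤ R.e * m :=
    le_trans (mul_le_mul_of_nonneg_left (by linarith) (abs_nonneg _)) (h5.trans h2')
  exact le_of_mul_le_mul_right h6 h1'

lemma ok_inv {I g : TM} {f : ℝ → ℝ} (hf : Ok g f) (h : invOk I g = true) :
    Ok I (fun t => (f t)⁻¹) := by
  simp only [invOk, Bool.and_eq_true, decide_eq_true_eq] at h
  obtain ⟨h1, h2⟩ := h
  intro t ht
  have hd := (((ok_exact I.p).mul hf).sub ok_one).size t ht
  have hs := abs_ev_le I.p t ht
  set d := (TM.sub (TM.mul ⟨I.p, 0⟩ g) TM.one).size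
  have h1' : (d : ℝ) ≤ 1 / 2 := by
    have h0 := (Rat.cast_le (K := ℝ)).mpr h1
    rw [show ((1 / 2 : ℚ) : ℝ) = 1 / 2 by norm_num] at h0
    exact h0
  have h2' : 2 * (sabs I.p : ℝ) * d ≤ I.e := by exact_mod_cast h2
  set P := ev I.p t
  have hfne : f t ≠ 0 := by
    intro h0
    rw [h0] at hd
    norm_num at hd
    linarith
  show |(f t)⁻¹ - P| ≤ I.e
  set y := (f t)⁻¹ with hy
  have hyf : y * f t = 1 := inv_mul_cancel₀ hfne
  have e1 : |y - P| = |y| * |P * f t - 1| := by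
    rw [← abs_mul, ← abs_neg]
    congr 1
    have : y * (P * f t - 1) = P * (y * f t) - y := by ring
    rw [this, hyf]; ring
  have hd2 : |P * f t - 1| ≤ 1 / 2 := hd.trans h1'
  have hy2 : |y| ≤ 2 * |P| := by
    have a1 : |y| ≤ |y - P| + |P| := by
      have := abs_add_le (y - P) P
      simpa using this
    have a2 : |y| * |P * f t - 1| ≤ |y| * (1 / 2) := mul_le_mul_of_nonneg_left hd2 (abs_nonneg _)
    linarith
  rw [e1]
  calc |y| * |P * f t - 1| ≤ (2 * sabs I.p) * d :=
        mul_le_mul (by linarith) hd (abs_nonneg _) (by linarith [abs_nonneg P])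
    _ ≤ I.e := h2'

lemma ok_F {X r s c i j : TM} {fX fr fs fc fi fj : ℝ → ℝ} (hX : Ok X fX) (hr : Ok r fr)
    (hs : Ok s fs) (hc : Ok c fc) (hi : Ok i fi) (hj : Ok j fj) :
    Ok (tF X r s c i j) (fun t => Fr (fX t) (fr t) (fs t) (fc t) (fi t) (fj t)) := by
  have hu := hc.sub hr
  have hw := (ok_one.add hs).sub hr
  have hB := hi.add (hj.sm 22)
  have hBu := hB.mul hu
  have hwi := hw.mul hi
  have h := (hu.mul ((((hu.mul hu).sm (4 / 3)).add ((hu.mul hw).sm (-2))).add (hw.mul hw))).add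
    (hX.mul (hu.mul ((((hBu.mul hBu).sm (1 / 3)).sub (hBu.mul hwi)).add (hwi.mul hwi))))
  intro t ht
  have h' := h t ht
  unfold tF tF2
  convert h' using 3
  simp only [Fr]
  push_cast
  ring

lemma ev_cont (l : List ℚ) : Continuous (ev l) := by
  induction l with
  | nil => simpa [ev] using continuous_const
  | cons a l ih =>
    simp only [ev]
    fun_prop

lemma int_ev (k : ℕ) (l : List ℚ) : ∫ t in (-1 : ℝ)..1, t ^ k * ev l t = (pint k l : ℝ) := by
  induction l generalizing k with
  | nil => simp [ev, pint]
  | cons a l ih =>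
    have hc := ev_cont l
    have : ∀ t : ℝ, t ^ k * ev (a :: l) t = (a : ℝ) * t ^ k + t ^ (k + 1) * ev l t := by
      intro t; simp only [ev]; ring
    simp only [this]
    rw [intervalIntegral.integral_add (by apply Continuous.intervalIntegrable; fun_prop)
      (by apply Continuous.intervalIntegrable; fun_prop), ih, intervalIntegral.integral_const_mul,
      integral_pow]
    simp only [pint]
    push_cast
    congr 1
    split_ifs with h
    · have : Odd (k + 1) := (Nat.even_iff.mpr h).add_one
      rw [this.neg_one_pow]
      push_cast
      ring
    · have : Even (k + 1) := (Nat.not_even_iff_odd.mp (fun h' => h (Nat.even_iff.mp h'))).add_one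
      rw [this.neg_one_pow]
      simp

lemma int_le {F : TM} {f : ℝ → ℝ} (hf : Ok F f)
    (hi : IntervalIntegrable f MeasureTheory.volume (-1) 1) :
    ∫ t in (-1 : ℝ)..1, f t ≤ (pieceBound F : ℝ) := by
  have hc := ev_cont F.p
  have h1 : ∫ t in (-1 : ℝ)..1, f t ≤ ∫ t in (-1 : ℝ)..1, (ev F.p t + F.e) := by
    apply intervalIntegral.integral_mono_on (by norm_num) hi
    · apply Continuous.intervalIntegrable; fun_prop
    · intro t ht
      have := hf t (abs_le.mpr ht)
      linarith [(abs_le.mp this).2]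
  refine h1.trans (le_of_eq ?_)
  rw [intervalIntegral.integral_add (by apply Continuous.intervalIntegrable; fun_prop)
      (by simp)]
  have := int_ev 0 F.p
  simp only [pow_zero, one_mul] at this
  rw [this, intervalIntegral.integral_const, pieceBound]
  push_cast
  simp only [smul_eq_mul]
  ring

/-- Full check of one piece. -/
def check (m h b : ℚ) (r s c i j : TM) : Bool :=
  sqrtOk r (tgr m h) && (sqrtOk s (tgs m h) && (sqrtOk c (tgc m h) && (invOk i r && (invOk j s &&
    decide (pieceBound (tF (tX m h) r s c i j) ≤ b)))))

noncomputable def Ft (A Q K : ℝ) (x : ℝ) : ℝ :=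
  Fr (A * (x * x)) (Real.sqrt (Q - A * (x * x))) (Real.sqrt (1 - 22 * (A * (x * x))))
    (Real.sqrt (1 - A * (x * x) - K * x)) (Real.sqrt (Q - A * (x * x)))⁻¹
    (Real.sqrt (1 - 22 * (A * (x * x))))⁻¹

lemma piece {A Q K : ℝ} (hA : Ok cA fun _ => A) (hQ : Ok cQ fun _ => Q) (hK : Ok cK fun _ => K)
    {m h b : ℚ} {r s c i j : TM} (hh : 0 < h) (hck : check m h b r s c i j = true)
    (hi : IntervalIntegrable (Ft A Q K) MeasureTheory.volume ((m - h : ℚ) : ℝ) ((m + h : ℚ) : ℝ)) :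
    ∫ x in ((m - h : ℚ) : ℝ)..((m + h : ℚ) : ℝ), Ft A Q K x ≤ (h : ℝ) * b := by
  simp only [check, Bool.and_eq_true, decide_eq_true_eq] at hck
  obtain ⟨k1, k2, k3, k4, k5, k6⟩ := hck
  have hh' : (0 : ℝ) < h := by exact_mod_cast hh
  have hX : Ok (tX m h) (fun t => A * (((h : ℝ) * t + m) * (h * t + m))) := by
    have := hA.mul (ok_exact [m * m, 2 * (m * h), h * h])
    intro t ht
    have h' := this t ht
    unfold tX
    convert h' using 3
    simp only [ev]
    push_cast
    ring
  have hx : Ok ⟨[m, h], 0⟩ (fun t => ((h : ℝ) * t + m)) := by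
    have := ok_exact [m, h]
    intro t ht
    have h' := this t ht
    convert h' using 3
    simp only [ev]
    ring
  have hr := ok_sqrt (hQ.sub hX) k1
  have hs := ok_sqrt (ok_one.sub (hX.sm 22)) k2
  have hc := ok_sqrt ((ok_one.sub hX).sub (hK.mul hx)) k3
  have hF := ok_F hX hr hs hc (ok_inv hr k4) (ok_inv hs k5)
  have hF' : Ok (tF (tX m h) r s c i j) (fun t => Ft A Q K (h * t + m)) := by
    intro t ht
    have h' := hF t ht
    simp only [Ft]
    push_cast at h'
    exact h'
  have e1 : ((h : ℝ)) * (-1) + m = ((m - h : ℚ) : ℝ) := by push_cast; ring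
  have e2 : ((h : ℝ)) * 1 + m = ((m + h : ℚ) : ℝ) := by push_cast; ring
  have hii : IntervalIntegrable (fun t => Ft A Q K (h * t + m)) MeasureTheory.volume (-1) 1 := by
    have := (hi.comp_add_right (m : ℝ)).comp_mul_left (c := (h : ℝ))
    convert this using 1
    · push_cast; field_simp; ring
    · push_cast; field_simp; ring
  have hle := int_le hF' hii
  rw [intervalIntegral.integral_comp_mul_add _ hh'.ne', e1, e2, smul_eq_mul] at hle
  have k6' : (pieceBound (tF (tX m h) r s c i j) : ℝ) ≤ b := by exact_mod_cast k6
  have h3 := mul_le_mul_of_nonneg_left (hle.trans k6') hh'.le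
  rwa [← mul_assoc, mul_inv_cancel₀ hh'.ne', one_mul] at h3

lemma ck0 : check (7 / 40) (7 / 40) (4052062759 / 2500000000)
    (mk [29211449668, -375316722, -190069447, -2442064, -649736, -24238, -4641, -272] 98)
    (mk [98786648886, -2441605263, -1250975921, -30919051, -8685005, -606199, -129803, -13603] 5902)
    (mk [91598494057, -8846648893, -487053543, -47039984, -5838052, -813967, -121735, -19083] 7435)
    (mk [342331521152, 4398369333, 2283951851, 86582371, 23955390, 1443961, 290501, 22834] 9762)
    (mk [101228254149, 2501951841, 1343733072, 96578119, 29086007, 3203614, 744237, 102030] 56096) = true := by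
  decide +kernel

lemma ck1 : check (467 / 1000) (117 / 1000) (448329197 / 312500000)
    (mk [28039221303, -697608432, -96065937, -2390095, -224032, -13763, -1212, -96] 23)
    (mk [91007489080, -4728498094, -715167779, -37158145, -4740650, -538312, -72809, -9949] 3366)
    (mk [75203329551, -7366701299, -393392547, -38535599, -4803765, -672145, -100843, -15856] 6200)
    (mk [356643285199, 8873190890, 1442667887, 96694557, 10954422, 972755, 101272, 9876] 2657)
    (mk [109881066943, 5709117138, 1160112746, 150004624, 24965196, 3896924, 642014, 105429] 46874) = true := by
  decide +kernel

lemma ck2 : check (331 / 500) (39 / 500) (2260138989 / 2000000000)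
    (mk [26596689853, -695024207, -50026715, -1307297, -81211, -4581, -305, -21] 9)
    (mk [80922522359, -5025517494, -452114654, -28077599, -3006682, -343593, -43007, -5634] 1785)
    (mk [61605680429, -6083509175, -318047906, -31406963, -3922395, -549476, -82516, -12985] 5082)
    (mk [375986638014, 9825275860, 963961341, 62151682, 5068281, 391491, 31760, 2575] 753)
    (mk [123574991344, 7674356442, 1167013513, 158228197, 23600731, 3564446, 549741, 85760] 35268) = true := by
  decide +kernel

lemma ck3 : check (99 / 125) (13 / 250) (4169920171 / 5000000000)
    (mk [25292607874, -582921189, -25853622, -595851, -26946, -1230, -63, -3] 4)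
    (mk [71131996092, -4559961097, -295855272, -18965987, -1831093, -196268, -22726, -2761] 805)
    (mk [50397890501, -5005616580, -258187506, -25643686, -3208326, -450029, -67658, -10658] 4177)
    (mk [395372436474, 9112186917, 614151634, 32783020, 2019216, 123452, 7762, 492] 247)
    (mk [140583711261, 9012206735, 1162454995, 149487824, 20439809, 2861902, 408043, 58904] 21985) = true := by
  decide +kernel

lemma ck4 : check (1757 / 2000) (69 / 2000) (1178079403 / 2000000000)
    (mk [24248435090, -447457789, -12914648, -238315, -7837, -272, -10, 0] 6)
    (mk [62623588805, -3811715839, -190849904, -11616479, -997876, -96140, -9970, -1085] 280)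
    (mk [41206522728, -4087737625, -207924611, -20626377, -2570747, -359100, -53757, -8432] 3290)
    (mk [412397747032, 7609999713, 360069650, 14750515, 672037, 30874, 1450, 69] 304)
    (mk [159684237057, 9719515398, 1078247884, 124871663, 15234042, 1907842, 243241, 31405] 10260) = true := by
  decide +kernel

lemma ck5 : check (117 / 125) (23 / 1000) (484081823 / 1250000000)
    (mk [23465630577, -328432694, -6333657, -88648, -2096, -53, -1, 0] 5)
    (mk [55677612954, -3045234107, -120692827, -6601179, -491859, -41211, -3712, -351] 83)
    (mk [33694545386, -3346765689, -169021705, -16788357, -2091462, -291953, -43673, -6844] 2669)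
    (mk [426155179054, 5964608245, 198507046, 5998209, 198122, 6642, 227, 8] 266)
    (mk [179605400978, 9823346654, 926610737, 93268395, 9861154, 1071104, 118447, 13265] 3733) = true := by
  decide +kernel

lemma ck6 : check (1949 / 2000) (31 / 2000) (248227091 / 1250000000)
    (mk [22897683025, -236154883, -3095881, -31929, -539, -10, 0, 0] 4)
    (mk [50206514665, -2369469246, -74756815, -3528107, -222163, -15738, -1198, -96] 23)
    (mk [27518447328, -2769389135, -140915001, -14181341, -1787970, -252556, -38226, -6062] 2397)
    (mk [436725409681, 4504160439, 105501049, 2306053, 54601, 1316, 32, 1] 229)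
    (mk [199177339171, 9400066560, 740203384, 62926639, 5613859, 514686, 48044, 4542] 1106) = true := by
  decide +kernel

lemma ck7 : check (199 / 200) (1 / 200) (242649453 / 5000000000)
    (mk [22579858214, -78876349, -335948, -1174, -7, 0, 0, 0] 4)
    (mk [46933021573, -834857164, -9522963, -169397, -3979, -105, -3, 0] 4)
    (mk [23569654968, -1044577699, -23337049, -1034269, -57391, -3568, -238, -17] 8)
    (mk [442872577189, 1547050110, 11993334, 87930, 695, 6, 0, 0] 233)
    (mk [213069597157, 3790139088, 110652977, 3506404, 116571, 3983, 139, 5] 55) = true := by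
  decide +kernel


lemma consts (b : ℝ) (hb : 0 < b) (hb4 : b ^ 4 = 2) :
    (11892071150027210667174 / 10000000000000000000000 : ℝ) ≤ b ∧ b ≤ 11892071150027210667175 / 10000000000000000000000 := by
  constructor
  · by_contra hlt
    push Not at hlt
    have := pow_lt_pow_left₀ hlt hb.le (n := 4) (by norm_num)
    rw [hb4] at this
    norm_num at this
  · by_contra hlt
    push Not at hlt
    have := pow_lt_pow_left₀ hlt (by norm_num) (n := 4) (by norm_num)
    rw [hb4] at this
    norm_num at this

lemma consts2 (b : ℝ) (h1 : (11892071150027210667174 / 10000000000000000000000 : ℝ) ≤ b) (h2 : b ≤ 11892071150027210667175 / 10000000000000000000000) :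
    (28709999455101501527792 / 10000000000000000000000 : ℝ) ≤ Real.sqrt (4 + 3 * b ^ 2) ∧
      Real.sqrt (4 + 3 * b ^ 2) ≤ 28709999455101501527802 / 10000000000000000000000 := by
  constructor
  · apply Real.le_sqrt_of_sq_le
    nlinarith
  · rw [Real.sqrt_le_left (by norm_num)]
    nlinarith

lemma total {A Q K : ℝ} (hA : Ok cA fun _ => A) (hQ : Ok cQ fun _ => Q) (hK : Ok cK fun _ => K) :
    ∫ x in (0 : ℝ)..1, Ft A Q K x ≤ (1231122151 / 2000000000) := by
  by_cases hi : IntervalIntegrable (Ft A Q K) MeasureTheory.volume 0 1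
  swap
  · rw [intervalIntegral.integral_undef hi]
    norm_num
  have sub : ∀ l r : ℝ, 0 ≤ l → l ≤ r → r ≤ 1 →
      IntervalIntegrable (Ft A Q K) MeasureTheory.volume l r := by
    intro l r h0 h1 h2
    apply hi.mono_set
    rw [Set.uIcc_of_le h1, Set.uIcc_of_le zero_le_one]
    exact Set.Icc_subset_Icc h0 h2
  have p0 := piece hA hQ hK (by norm_num) ck0 (sub _ _ (by norm_num) (by norm_num) (by norm_num))
  have p1 := piece hA hQ hK (by norm_num) ck1 (sub _ _ (by norm_num) (by norm_num) (by norm_num))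
  have p2 := piece hA hQ hK (by norm_num) ck2 (sub _ _ (by norm_num) (by norm_num) (by norm_num))
  have p3 := piece hA hQ hK (by norm_num) ck3 (sub _ _ (by norm_num) (by norm_num) (by norm_num))
  have p4 := piece hA hQ hK (by norm_num) ck4 (sub _ _ (by norm_num) (by norm_num) (by norm_num))
  have p5 := piece hA hQ hK (by norm_num) ck5 (sub _ _ (by norm_num) (by norm_num) (by norm_num))
  have p6 := piece hA hQ hK (by norm_num) ck6 (sub _ _ (by norm_num) (by norm_num) (by norm_num))
  have p7 := piece hA hQ hK (by norm_num) ck7 (sub _ _ (by norm_num) (by norm_num) (by norm_num))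
  norm_num at p0 p1 p2 p3 p4 p5 p6 p7
  have s0 := intervalIntegral.integral_add_adjacent_intervals (sub 0 (7 / 20) (by norm_num) (by norm_num) (by norm_num))
    (sub (7 / 20) (73 / 125) (by norm_num) (by norm_num) (by norm_num))
  have s1 := intervalIntegral.integral_add_adjacent_intervals (sub 0 (73 / 125) (by norm_num) (by norm_num) (by norm_num))
    (sub (73 / 125) (37 / 50) (by norm_num) (by norm_num) (by norm_num))
  have s2 := intervalIntegral.integral_add_adjacent_intervals (sub 0 (37 / 50) (by norm_num) (by norm_num) (by norm_num))
    (sub (37 / 50) (211 / 250) (by norm_num) (by norm_num) (by norm_num))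
  have s3 := intervalIntegral.integral_add_adjacent_intervals (sub 0 (211 / 250) (by norm_num) (by norm_num) (by norm_num))
    (sub (211 / 250) (913 / 1000) (by norm_num) (by norm_num) (by norm_num))
  have s4 := intervalIntegral.integral_add_adjacent_intervals (sub 0 (913 / 1000) (by norm_num) (by norm_num) (by norm_num))
    (sub (913 / 1000) (959 / 1000) (by norm_num) (by norm_num) (by norm_num))
  have s5 := intervalIntegral.integral_add_adjacent_intervals (sub 0 (959 / 1000) (by norm_num) (by norm_num) (by norm_num))
    (sub (959 / 1000) (99 / 100) (by norm_num) (by norm_num) (by norm_num))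
  have s6 := intervalIntegral.integral_add_adjacent_intervals (sub 0 (99 / 100) (by norm_num) (by norm_num) (by norm_num))
    (sub (99 / 100) 1 (by norm_num) (by norm_num) (by norm_num))
  linarith

lemma inner (x r s c : ℝ) :
    (∫ y in r..c, ((2 * y - s - 1 - r) ^ 2 +
      (x * (y - s - 1) / r + 22 * x * (y - r) / s) ^ 2)) = Fr (x * x) r s c r⁻¹ s⁻¹ := by
  have e : ∀ y : ℝ, (2 * y - s - 1 - r) ^ 2 + (x * (y - s - 1) / r + 22 * x * (y - r) / s) ^ 2 =
      (4 + x ^ 2 * (r⁻¹ + 22 * s⁻¹) ^ 2) * (y - r) ^ 2 +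
      (-(4 * (1 + s - r) + 2 * x ^ 2 * (r⁻¹ + 22 * s⁻¹) * ((1 + s - r) * r⁻¹))) * (y - r) ^ 1 +
      ((1 + s - r) ^ 2 + x ^ 2 * ((1 + s - r) * r⁻¹) ^ 2) * (y - r) ^ 0 := by
    intro y
    simp only [div_eq_mul_inv]
    ring
  simp only [e]
  rw [intervalIntegral.integral_comp_sub_right (fun z =>
      (4 + x ^ 2 * (r⁻¹ + 22 * s⁻¹) ^ 2) * z ^ 2 +
      (-(4 * (1 + s - r) + 2 * x ^ 2 * (r⁻¹ + 22 * s⁻¹) * ((1 + s - r) * r⁻¹))) * z ^ 1 +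
      ((1 + s - r) ^ 2 + x ^ 2 * ((1 + s - r) * r⁻¹) ^ 2) * z ^ 0) r]
  rw [intervalIntegral.integral_add (by apply Continuous.intervalIntegrable; fun_prop)
      (by apply Continuous.intervalIntegrable; fun_prop),
    intervalIntegral.integral_add (by apply Continuous.intervalIntegrable; fun_prop)
      (by apply Continuous.intervalIntegrable; fun_prop)]
  simp only [intervalIntegral.integral_const_mul, integral_pow]
  simp only [Fr]
  norm_num
  ring

lemma cot_eq : Real.cos (Real.pi / 8) / Real.sin (Real.pi / 8) = 1 + Real.sqrt 2 := by
  have hs : 0 < Real.sin (Real.pi / 8) :=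
    Real.sin_pos_of_pos_of_lt_pi (by positivity) (by linarith [Real.pi_pos])
  have h1 : 2 * Real.sin (Real.pi / 8) * Real.cos (Real.pi / 8) = Real.sqrt 2 / 2 := by
    rw [← Real.sin_two_mul, show 2 * (Real.pi / 8) = Real.pi / 4 by ring, Real.sin_pi_div_four]
  have h2 : 1 - 2 * Real.sin (Real.pi / 8) ^ 2 = Real.sqrt 2 / 2 := by
    have := Real.cos_two_mul (Real.pi / 8)
    rw [show 2 * (Real.pi / 8) = Real.pi / 4 by ring, Real.cos_pi_div_four] at this
    have h3 := Real.sin_sq_add_cos_sq (Real.pi / 8)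
    linarith
  have h4 : Real.sqrt 2 * Real.sqrt 2 = 2 := Real.mul_self_sqrt (by norm_num)
  rw [div_eq_iff hs.ne']
  have : 2 * Real.sin (Real.pi / 8) * (Real.cos (Real.pi / 8) -
      (1 + Real.sqrt 2) * Real.sin (Real.pi / 8)) = 0 := by
    have : 2 * Real.sin (Real.pi / 8) * (Real.cos (Real.pi / 8) -
      (1 + Real.sqrt 2) * Real.sin (Real.pi / 8)) =
      2 * Real.sin (Real.pi / 8) * Real.cos (Real.pi / 8) -
        (1 + Real.sqrt 2) * (2 * Real.sin (Real.pi / 8) ^ 2) := by ring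
    rw [this, h1, show 2 * Real.sin (Real.pi / 8) ^ 2 = 1 - Real.sqrt 2 / 2 by linarith]
    nlinarith
  have := (mul_eq_zero.mp this).resolve_left (by positivity)
  linarith

lemma csq (x : ℝ) : (1 / Real.sin (Real.pi / 8)) ^ 2 -
    (x + Real.cos (Real.pi / 8) / Real.sin (Real.pi / 8)) ^ 2 =
    1 - x * x - 2 * (1 + Real.sqrt 2) * x := by
  have hs : 0 < Real.sin (Real.pi / 8) :=
    Real.sin_pos_of_pos_of_lt_pi (by positivity) (by linarith [Real.pi_pos])
  have h3 := Real.sin_sq_add_cos_sq (Real.pi / 8)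
  have h5 : (1 / Real.sin (Real.pi / 8)) ^ 2 -
    (Real.cos (Real.pi / 8) / Real.sin (Real.pi / 8)) ^ 2 = 1 := by
    field_simp
    linarith
  rw [cot_eq] at *
  nlinarith

end Bolza

/-- Upper bound `‖∇φ₁‖² < 116469/10⁶` for the hyperbolic Dirichlet integral of
the test function `φ₁(x,y) = (y − √(1−22x²) − 1)(y − √(q²−x²))` over the
hyperbolic (2,4,8) triangle `Ω_T` in the upper half-plane (Section 3.3 of the
paper); the integrand is the squared Euclidean gradient of `φ₁`. -/
theorem bolza_test_function_gradient_upper_bound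
    (q a : ℝ)
    (hq : q = Real.sqrt (3 + 2 * Real.sqrt 2 - 2 * Real.sqrt (4 + 3 * Real.sqrt 2)))
    (ha : a = (2 : ℝ) ^ ((1 : ℝ) / 4) - 1)
    (c₁ c₂ : ℝ → ℝ)
    (hc₁ : ∀ x : ℝ, c₁ x = Real.sqrt (q ^ 2 - x ^ 2))
    (hc₂ : ∀ x : ℝ, c₂ x = Real.sqrt ((1 / Real.sin (Real.pi / 8)) ^ 2 -
        (x + Real.cos (Real.pi / 8) / Real.sin (Real.pi / 8)) ^ 2)) :
    (∫ x in (0 : ℝ)..a, ∫ y in (c₁ x)..(c₂ x),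
        ((2 * y - Real.sqrt (1 - 22 * x ^ 2) - 1 - Real.sqrt (q ^ 2 - x ^ 2)) ^ 2 +
          (x * (y - Real.sqrt (1 - 22 * x ^ 2) - 1) / Real.sqrt (q ^ 2 - x ^ 2) +
            22 * x * (y - Real.sqrt (q ^ 2 - x ^ 2)) /
              Real.sqrt (1 - 22 * x ^ 2)) ^ 2)) <
      116469 / 1000000 := by
  have hb : (0 : ℝ) < (2 : ℝ) ^ ((1 : ℝ) / 4) := by positivity
  have hb4 : ((2 : ℝ) ^ ((1 : ℝ) / 4)) ^ 4 = 2 := by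
    rw [← Real.rpow_natCast, ← Real.rpow_mul (by norm_num)]
    norm_num
  set b := (2 : ℝ) ^ ((1 : ℝ) / 4)
  have hs2 : Real.sqrt 2 = b ^ 2 := by
    rw [← hb4, show b ^ 4 = (b ^ 2) ^ 2 by ring, Real.sqrt_sq (by positivity)]
  obtain ⟨b1, b2⟩ := Bolza.consts b hb hb4
  obtain ⟨w1, w2⟩ := Bolza.consts2 b b1 b2
  have b2l : (11892071150027210667174 / 10000000000000000000000 : ℝ) ^ 2 ≤ b ^ 2 := pow_le_pow_left₀ (by norm_num) b1 2
  have b2u : b ^ 2 ≤ (11892071150027210667175 / 10000000000000000000000 : ℝ) ^ 2 := pow_le_pow_left₀ hb.le b2 2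
  have b3l : (11892071150027210667174 / 10000000000000000000000 : ℝ) ^ 3 ≤ b ^ 3 := pow_le_pow_left₀ (by norm_num) b1 3
  have b3u : b ^ 3 ≤ (11892071150027210667175 / 10000000000000000000000 : ℝ) ^ 3 := pow_le_pow_left₀ hb.le b2 3
  norm_num at b2l b2u b3l b3u
  rw [hs2] at hq
  set w := Real.sqrt (4 + 3 * b ^ 2)
  have hq2 : q ^ 2 = 3 + 2 * b ^ 2 - 2 * w := by
    rw [hq]
    apply Real.sq_sqrt
    linarith
  have hA : Bolza.Ok Bolza.cA fun _ => a ^ 2 := by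
    intro t _
    simp only [Bolza.cA, Bolza.ev]
    rw [show a ^ 2 = b ^ 2 - 2 * b + 1 by rw [ha]; ring, abs_le]
    norm_num
    constructor <;> linarith
  have hQ : Bolza.Ok Bolza.cQ fun _ => q ^ 2 := by
    intro t _
    simp only [Bolza.cQ, Bolza.ev]
    rw [hq2, abs_le]
    norm_num
    constructor <;> linarith
  have hK : Bolza.Ok Bolza.cK fun _ => 2 * (1 + b ^ 2) * a := by
    intro t _
    simp only [Bolza.cK, Bolza.ev]
    rw [show 2 * (1 + b ^ 2) * a = 2 * b ^ 3 - 2 * b ^ 2 + 2 * b - 2 by rw [ha]; ring, abs_le]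
    norm_num
    constructor <;> linarith
  have htot := Bolza.total hA hQ hK
  simp only [hc₁, hc₂, Bolza.csq, Bolza.inner]
  have hsc := intervalIntegral.mul_integral_comp_mul_left (a := 0) (b := 1) (f := fun x =>
    Bolza.Fr (x * x) (Real.sqrt (q ^ 2 - x ^ 2)) (Real.sqrt (1 - 22 * x ^ 2))
      (Real.sqrt (1 - x * x - 2 * (1 + Real.sqrt 2) * x)) (Real.sqrt (q ^ 2 - x ^ 2))⁻¹
      (Real.sqrt (1 - 22 * x ^ 2))⁻¹) a
  rw [mul_zero, mul_one] at hsc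
  rw [← hsc]
  have heq : ∀ x : ℝ, Bolza.Fr (a * x * (a * x)) (Real.sqrt (q ^ 2 - (a * x) ^ 2))
      (Real.sqrt (1 - 22 * (a * x) ^ 2))
      (Real.sqrt (1 - a * x * (a * x) - 2 * (1 + Real.sqrt 2) * (a * x)))
      (Real.sqrt (q ^ 2 - (a * x) ^ 2))⁻¹
      (Real.sqrt (1 - 22 * (a * x) ^ 2))⁻¹ = Bolza.Ft (a ^ 2) (q ^ 2) (2 * (1 + b ^ 2) * a) x := by
    intro x
    simp only [Bolza.Ft, hs2]
    rw [show a * x * (a * x) = a ^ 2 * (x * x) by ring,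
      show (a * x) ^ 2 = a ^ 2 * (x * x) by ring,
      show 2 * (1 + b ^ 2) * (a * x) = 2 * (1 + b ^ 2) * a * x by ring]
  simp only [heq]
  have ha0 : 0 ≤ a := by rw [ha]; linarith
  have := mul_le_mul_of_nonneg_left htot ha0
  refine this.trans_lt ?_
  rw [ha]
  linarith
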